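/- arXiv:1411.0645 — 2 statements merged into one kernel-verified Lean document; each statement's English description precedes it below -/
import Mathlib

section
/- Let 0 < q ≤ p ≤ +∞, let μ and ν be non-negative Borel measures on I = (a,b) ⊆ ℝ, let w ∈ B⁺(I), and let u ∈ B⁺(I) satisfy ‖u‖_{q,(a,t],ν} < ∞ for all t ∈ I and u ≠ 0 ν-a.e. on (a,b). Then there exists a constant c > 0 such that ‖gw‖_{p,(a,b),μ} ≤ c ‖u(x) ‖g‖_{∞,(x,b),μ}‖_{q,(a,b),ν} for all g ∈ B⁺(I) if and only if A₁ := ‖ ‖w‖_{p,(a,x],μ} · ‖u‖_{q,(a,x),ν}^{-1} ‖_{∞,(a,b),μ} < ∞. Moreover, the best possible constant c satisfies c ≈ A₁, with equivalence constants depending only on p and q. -/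
/-!
Write `G x = ‖g‖_{∞,(x,b),μ}`, `W x = ‖w‖_{p,(a,x],μ}` and `U x = ‖u‖_{q,(a,x),ν}`.

Necessity (`A_le`): for `g` the indicator of `(a,x]` one has `G ≤ 1` and `G = 0` on `[x,b)`, so the
inequality with constant `c` gives `W x ≤ c * U x` for every `x`. Hence `A₁` is at most the best
constant.

Sufficiency: if `A₁ < ∞` then `W ≤ A₁ * U` holds `μ`-a.e. (`ae_weight`), and for `μ`-a.e. `t` one
has `g t ≤ G s` for all `s < t` (`ae_le_eSup_Ioo`).
* For `p = ∞`, also `w ≤ W` a.e., and at almost every `t`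
  `g t * w t ≤ A₁ * g t * U t ≤ A₁ * ‖u G‖_{q,(a,b),ν}` (`upper_top`).
* For `p < ∞`, fix a level `l`. If `t` is a good point with `g t > l`, then `(a,t)` is contained in
  `{G > l}`, so the `w^p μ`-mass of `(a,t]` is at most `A₁^p` times the `p/q`-th power of the
  `u^q ν`-mass of `{G > l}`. Countably many such `(a,t]` cover almost all of `{g > l}`, so the same
  bound holds for the mass of `{g > l}` (`level_bound`). Summing over `l = 2^k`, `k ∈ ℤ`, and
  using `p/q ≥ 1` to pull the power out of the sum gives the inequality (`upper_finite`).

The measures need not be σ-finite; the covering step is `measure_le_of_forall_Iic`, valid for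
every Borel measure and every set.
-/

open MeasureTheory Set ENNReal

noncomputable section

/-- The `μ`-essential supremum of `f` over `E`:
`‖f‖_{∞,E,μ} = sup {α : μ({y ∈ E : f y ≥ α}) > 0}`. -/
def eSup (μ : Measure ℝ) (E : Set ℝ) (f : ℝ → ℝ≥0∞) : ℝ≥0∞ :=
  sSup {α : ℝ≥0∞ | 0 < μ {y | y ∈ E ∧ α ≤ f y}}

/-- `‖f‖_{p,E,μ}` for `0 < p ≤ ∞`. -/
def Nrm (p : ℝ≥0∞) (μ : Measure ℝ) (E : Set ℝ) (f : ℝ → ℝ≥0∞) : ℝ≥0∞ :=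
  if p = ⊤ then eSup μ E f
  else (∫⁻ x in E, f x ^ p.toReal ∂μ) ^ (1 / p.toReal)

/-- `‖u(x) ‖g‖_{∞,(x,b),μ}‖_{q,(a,b),ν}`. -/
def RHSsup (q : ℝ≥0∞) (a b : ℝ) (μ ν : Measure ℝ) (u g : ℝ → ℝ≥0∞) : ℝ≥0∞ :=
  Nrm q ν (Ioo a b) (fun x => u x * eSup μ (Ioo x b) g)

/-- The best constant in the inequality
`‖gw‖_{p,(a,b),μ} ≤ c ‖u(x) ‖g‖_{∞,(x,b),μ}‖_{q,(a,b),ν}` over all `g ∈ B⁺((a,b))`. -/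
def bestC (p q : ℝ≥0∞) (a b : ℝ) (μ ν : Measure ℝ) (w u : ℝ → ℝ≥0∞) : ℝ≥0∞ :=
  sInf {c : ℝ≥0∞ | ∀ g : ℝ → ℝ≥0∞, Measurable g →
    Nrm p μ (Ioo a b) (fun t => g t * w t) ≤ c * RHSsup q a b μ ν u g}

/-! ### Essential suprema and norms -/

lemma eSup_eq_essSup (μ : Measure ℝ) {E : Set ℝ} (hE : MeasurableSet E) (f : ℝ → ℝ≥0∞) :
    eSup μ E f = essSup f (μ.restrict E) := by
  have key : ∀ α, μ {y | y ∈ E ∧ α ≤ f y} = μ.restrict E {y | α ≤ f y} := by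
    intro α
    rw [Measure.restrict_apply' hE]
    congr 1
    ext y
    simp [and_comm]
  apply le_antisymm
  · refine sSup_le fun α hα => ?_
    by_contra! hlt
    have h := ae_lt_of_essSup_lt hlt
    rw [ae_iff] at h
    simp only [not_lt] at h
    rw [mem_ofPred_eq, key, h] at hα
    exact lt_irrefl _ hα
  · refine le_of_forall_gt fun c hc => ?_
    obtain ⟨d, hd, hdc⟩ := exists_between hc
    refine lt_of_le_of_lt (essSup_le_of_ae_le d ?_) hdc
    have h0 : μ.restrict E {y | d ≤ f y} = 0 := by
      by_contra hne
      exact absurd (le_sSup (show d ∈ {α : ℝ≥0∞ | 0 < μ {y | y ∈ E ∧ α ≤ f y}} by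
        rw [mem_ofPred_eq, key]; exact pos_iff_ne_zero.2 hne)) (not_le.2 hd)
    have : ∀ᵐ y ∂μ.restrict E, f y < d := by
      rw [ae_iff]; simpa using h0
    filter_upwards [this] with y hy using hy.le

lemma ae_le_eSup (μ : Measure ℝ) {E : Set ℝ} (hE : MeasurableSet E) (f : ℝ → ℝ≥0∞) :
    ∀ᵐ x ∂μ.restrict E, f x ≤ eSup μ E f := by
  rw [eSup_eq_essSup μ hE]
  exact ENNReal.ae_le_essSup f

lemma eSup_le_of_ae (μ : Measure ℝ) {E : Set ℝ} (hE : MeasurableSet E) {f : ℝ → ℝ≥0∞}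
    {c : ℝ≥0∞} (h : ∀ᵐ x ∂μ.restrict E, f x ≤ c) : eSup μ E f ≤ c := by
  rw [eSup_eq_essSup μ hE]
  exact essSup_le_of_ae_le c h

lemma eSup_mono_set (μ : Measure ℝ) {E F : Set ℝ} (h : E ⊆ F) (f : ℝ → ℝ≥0∞) :
    eSup μ E f ≤ eSup μ F f :=
  sSup_le_sSup fun _ hα => lt_of_lt_of_le hα
    (measure_mono (ofPred_subset_ofPred.2 fun _ hy => ⟨h hy.1, hy.2⟩))

/-- Monotonicity of `‖·‖_{p,E,μ}` jointly in the set and the function. Points of `E` where `f`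
vanishes need not lie in `F`. -/
lemma Nrm_mono (p : ℝ≥0∞) (hp : 0 < p) (μ : Measure ℝ) {E F : Set ℝ}
    (hE : MeasurableSet E) (hF : MeasurableSet F) {f g : ℝ → ℝ≥0∞}
    (h : ∀ x ∈ E, f x ≠ 0 → x ∈ F ∧ f x ≤ g x) : Nrm p μ E f ≤ Nrm p μ F g := by
  unfold Nrm
  split_ifs with hpt
  · refine eSup_le_of_ae μ hE ?_
    have := ae_le_eSup μ hF g
    rw [ae_restrict_iff' hF] at this
    rw [ae_restrict_iff' hE]
    filter_upwards [this] with x hx hxE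
    by_cases h0 : f x = 0
    · simp [h0]
    · exact (h x hxE h0).2.trans (hx (h x hxE h0).1)
  · have hp0 : 0 < p.toReal := ENNReal.toReal_pos hp.ne' hpt
    refine ENNReal.rpow_le_rpow ?_ (by positivity)
    rw [← lintegral_indicator hE, ← lintegral_indicator hF]
    refine lintegral_mono fun x => ?_
    by_cases hxE : x ∈ E
    · by_cases h0 : f x = 0
      · simp [hxE, h0, hp0]
      · have := h x hxE h0
        simp only [indicator_of_mem hxE, indicator_of_mem this.1]
        exact ENNReal.rpow_le_rpow this.2 hp0.le
    · simp [hxE]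

lemma Nrm_mul_const (p : ℝ≥0∞) (hp : 0 < p) (μ : Measure ℝ) {E : Set ℝ}
    (hE : MeasurableSet E) {f : ℝ → ℝ≥0∞} (hf : Measurable f) (c : ℝ≥0∞) :
    Nrm p μ E (fun x => f x * c) = Nrm p μ E f * c := by
  unfold Nrm
  split_ifs with hpt
  · rw [eSup_eq_essSup μ hE, eSup_eq_essSup μ hE, mul_comm, ← ENNReal.essSup_const_mul]
    simp only [mul_comm]
  · have hp0 : 0 < p.toReal := ENNReal.toReal_pos hp.ne' hpt
    simp only [ENNReal.mul_rpow_of_nonneg _ _ hp0.le]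
    rw [lintegral_mul_const _ (hf.pow_const _),
      ENNReal.mul_rpow_of_nonneg _ _ (by positivity), ← ENNReal.rpow_mul,
      mul_one_div_cancel hp0.ne', ENNReal.rpow_one]

/-! ### Almost everywhere bounds by essential suprema -/

/-- A bound for a measure on all the half-lines ending in `T` is inherited by `T`, measurable
or not: countably many of these half-lines cover `T`. -/
lemma measure_le_of_forall_Iic (ρ : Measure ℝ) (T : Set ℝ) (B : ℝ≥0∞)
    (h : ∀ t ∈ T, ρ (Iic t) ≤ B) : ρ T ≤ B := by
  by_cases hmax : ∃ m ∈ T, ∀ t ∈ T, t ≤ m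
  · obtain ⟨m, hm, hle⟩ := hmax
    exact (measure_mono fun t ht => hle t ht).trans (h m hm)
  · push Not at hmax
    obtain ⟨D, hDc, hDd⟩ := TopologicalSpace.exists_countable_dense T
    have hcov : T ⊆ ⋃ d ∈ D, Iic (d : ℝ) := by
      intro t ht
      obtain ⟨t', ht', hlt⟩ := hmax t ht
      obtain ⟨d, hd1, hd2⟩ := hDd.exists_mem_open
        (isOpen_Ioi.preimage continuous_subtype_val : IsOpen ((↑) ⁻¹' (Ioi t) : Set T))
        ⟨⟨t', ht'⟩, hlt⟩
      exact mem_biUnion hd1 (mem_Iic.2 (le_of_lt hd2))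
    refine (measure_mono hcov).trans ?_
    rw [measure_biUnion_eq_iSup hDc]
    · exact iSup₂_le fun d _ => h d d.2
    · intro x hx y hy
      rcases le_total x y with hxy | hxy
      · exact ⟨y, hy, Iic_subset_Iic.2 hxy, subset_rfl⟩
      · exact ⟨x, hx, subset_rfl, Iic_subset_Iic.2 hxy⟩

/-- `w t ≤ ‖w‖_{∞,(a,t],μ}` for almost every `t`, for an arbitrary measure `μ`. -/
lemma ae_le_eSup_Ioc (μ : Measure ℝ) (a b : ℝ) {w : ℝ → ℝ≥0∞} (hw : Measurable w) :
    ∀ᵐ t ∂μ.restrict (Ioo a b), w t ≤ eSup μ (Ioc a t) w := by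
  have key : ∀ r : ℚ, ∀ᵐ t ∂μ.restrict (Ioo a b),
      ¬ (eSup μ (Ioc a t) w ≤ ENNReal.ofReal r ∧ ENNReal.ofReal r < w t) := by
    intro r
    have hS : MeasurableSet {t | ENNReal.ofReal r < w t} := measurableSet_lt measurable_const hw
    rw [ae_restrict_iff' measurableSet_Ioo, ae_iff]
    set T := {t | ¬ (t ∈ Ioo a b →
      ¬ (eSup μ (Ioc a t) w ≤ ENNReal.ofReal r ∧ ENNReal.ofReal r < w t))} with hT
    have hTS : T ⊆ {t | ENNReal.ofReal r < w t} ∩ Ioi a := by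
      intro t ht
      simp only [hT, mem_ofPred_eq, Classical.not_imp, not_not] at ht
      exact ⟨ht.2.2, ht.1.1⟩
    have h0 : (μ.restrict ({t | ENNReal.ofReal r < w t} ∩ Ioi a)) T ≤ 0 := by
      refine measure_le_of_forall_Iic _ _ _ fun t ht => ?_
      simp only [hT, mem_ofPred_eq, Classical.not_imp, not_not] at ht
      have h1 := ae_le_eSup μ (measurableSet_Ioc (a := a) (b := t)) w
      rw [ae_restrict_iff' measurableSet_Ioc, ae_iff] at h1
      rw [Measure.restrict_apply measurableSet_Iic]
      refine (measure_mono fun x hx => ?_).trans h1.le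
      simp only [mem_ofPred_eq, Classical.not_imp, not_le]
      exact ⟨⟨hx.2.2, hx.1⟩, ht.2.1.trans_lt hx.2.1⟩
    rw [Measure.restrict_apply' (hS.inter measurableSet_Ioi), inter_eq_left.2 hTS] at h0
    exact le_antisymm h0 zero_le
  rw [← ae_all_iff] at key
  filter_upwards [key] with t ht
  by_contra! hlt
  obtain ⟨r, hr0, hr1, hr2⟩ := ENNReal.lt_iff_exists_rat_btwn.1 hlt
  exact ht r ⟨hr1.le, hr2⟩

lemma antitone_eSup (μ : Measure ℝ) (b : ℝ) (g : ℝ → ℝ≥0∞) :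
    Antitone fun x => eSup μ (Ioo x b) g :=
  fun _ _ h => eSup_mono_set μ (Ioo_subset_Ioo_left h) g

/-- Almost every `t` satisfies `g t ≤ ‖g‖_{∞,(s,b),μ}` for all `s < t` simultaneously, because by
monotonicity only rational `s` matter. -/
lemma ae_le_eSup_Ioo (μ : Measure ℝ) (a b : ℝ) (g : ℝ → ℝ≥0∞) :
    ∀ᵐ t ∂μ.restrict (Ioo a b), ∀ s < t, g t ≤ eSup μ (Ioo s b) g := by
  have key : ∀ r : ℚ, ∀ᵐ t ∂μ, t ∈ Ioo (r : ℝ) b → g t ≤ eSup μ (Ioo r b) g := fun r =>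
    (ae_restrict_iff' measurableSet_Ioo).1 (ae_le_eSup μ measurableSet_Ioo g)
  rw [← ae_all_iff] at key
  rw [ae_restrict_iff' measurableSet_Ioo]
  filter_upwards [key] with t ht hab s hs
  obtain ⟨r, hr1, hr2⟩ := exists_rat_btwn hs
  exact (ht r ⟨hr2, hab.2⟩).trans (antitone_eSup μ b g hr1.le)

/-! ### Necessity -/

/-- Testing the inequality on indicators of `(a,x]`. -/
lemma A_le (p q : ℝ≥0∞) (hq : 0 < q) (hp : 0 < p) (a b : ℝ) (μ ν : Measure ℝ)
    (w u : ℝ → ℝ≥0∞) (c : ℝ≥0∞)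
    (h : ∀ g : ℝ → ℝ≥0∞, Measurable g →
      Nrm p μ (Ioo a b) (fun t => g t * w t) ≤ c * RHSsup q a b μ ν u g) :
    eSup μ (Ioo a b) (fun x => Nrm p μ (Ioc a x) w * (Nrm q ν (Ioo a x) u)⁻¹) ≤ c := by
  refine eSup_le_of_ae μ measurableSet_Ioo ?_
  filter_upwards [ae_restrict_mem measurableSet_Ioo] with x hx
  rw [← div_eq_mul_inv]
  refine ENNReal.div_le_of_le_mul ?_
  set g : ℝ → ℝ≥0∞ := (Ioc a x).indicator 1 with hg
  have hgm : Measurable g := measurable_one.indicator measurableSet_Ioc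
  calc Nrm p μ (Ioc a x) w ≤ Nrm p μ (Ioo a b) (fun t => g t * w t) := by
        refine Nrm_mono p hp μ measurableSet_Ioc measurableSet_Ioo fun t ht _ => ?_
        exact ⟨⟨ht.1, ht.2.trans_lt hx.2⟩, by simp [hg, ht]⟩
    _ ≤ c * RHSsup q a b μ ν u g := h g hgm
    _ ≤ c * Nrm q ν (Ioo a x) u := by
        gcongr
        refine Nrm_mono q hq ν measurableSet_Ioo measurableSet_Ioo fun t ht h0 => ?_
        have h1 : eSup μ (Ioo t b) g ≤ 1 := by
          refine eSup_le_of_ae μ measurableSet_Ioo (Filter.Eventually.of_forall fun y => ?_)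
          exact indicator_le_self' (fun _ _ => zero_le) y
        refine ⟨⟨ht.1, ?_⟩, mul_le_of_le_one_right' h1⟩
        by_contra! hxt
        refine h0 (mul_eq_zero_of_right _ (le_antisymm ?_ zero_le))
        refine eSup_le_of_ae μ measurableSet_Ioo ?_
        filter_upwards [ae_restrict_mem measurableSet_Ioo] with y hy
        have : y ∉ Ioc a x := fun hy' => absurd hy'.2 (not_le.2 (hxt.trans_lt hy.1))
        simp [hg, this]

/-! ### The weight condition, and sufficiency for infinite exponent -/

/-- If `A₁ = A` is finite then `‖w‖_{p,(a,t],μ} ≤ A ‖u‖_{q,(a,t),ν}` for almost every `t`.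
Finiteness of both `A` and the norm of `u` is what allows the quotient to be cleared. -/
lemma ae_weight (p q : ℝ≥0∞) (hq : 0 < q) (a b : ℝ) (μ ν : Measure ℝ)
    (w u : ℝ → ℝ≥0∞) (hu : ∀ t ∈ Ioo a b, Nrm q ν (Ioc a t) u < ⊤) {A : ℝ≥0∞}
    (hA : eSup μ (Ioo a b)
      (fun x => Nrm p μ (Ioc a x) w * (Nrm q ν (Ioo a x) u)⁻¹) = A) (hAt : A < ⊤) :
    ∀ᵐ t ∂μ.restrict (Ioo a b), Nrm p μ (Ioc a t) w ≤ A * Nrm q ν (Ioo a t) u := by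
  filter_upwards [ae_le_eSup μ measurableSet_Ioo
    (fun x => Nrm p μ (Ioc a x) w * (Nrm q ν (Ioo a x) u)⁻¹),
    ae_restrict_mem measurableSet_Ioo] with t ht htab
  have hfin : Nrm q ν (Ioo a t) u ≠ ⊤ := ((Nrm_mono q hq ν measurableSet_Ioo measurableSet_Ioc
    fun x hx _ => ⟨Ioo_subset_Ioc_self hx, le_rfl⟩).trans_lt (hu t htab)).ne
  rw [hA, ← div_eq_mul_inv] at ht
  exact (ENNReal.div_le_iff_le_mul (Or.inr hAt.ne) (Or.inl hfin)).1 ht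

/-- Sufficiency for `p = ∞`, with constant `1`: for almost every `t`,
`g t * w t ≤ g t * ‖w‖_{∞,(a,t],μ} ≤ A ‖u * g t‖_{q,(a,t),ν}`, and `g t` is at most
`‖g‖_{∞,(x,b),μ}` for every `x < t`. -/
lemma upper_top (q : ℝ≥0∞) (hq : 0 < q) (a b : ℝ) (μ ν : Measure ℝ)
    (w u : ℝ → ℝ≥0∞) (hw : Measurable w) (hum : Measurable u) {A : ℝ≥0∞}
    (hA : ∀ᵐ t ∂μ.restrict (Ioo a b), Nrm ⊤ μ (Ioc a t) w ≤ A * Nrm q ν (Ioo a t) u)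
    (g : ℝ → ℝ≥0∞) :
    Nrm ⊤ μ (Ioo a b) (fun t => g t * w t) ≤ A * RHSsup q a b μ ν u g := by
  rw [show Nrm ⊤ μ (Ioo a b) (fun t => g t * w t) = eSup μ (Ioo a b) (fun t => g t * w t) by
    simp [Nrm]]
  refine eSup_le_of_ae μ measurableSet_Ioo ?_
  filter_upwards [hA, ae_le_eSup_Ioc μ a b hw, ae_le_eSup_Ioo μ a b g,
    ae_restrict_mem measurableSet_Ioo] with t h1 h2 h3 ht
  have h2' : w t ≤ Nrm ⊤ μ (Ioc a t) w := by simpa [Nrm] using h2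
  calc g t * w t ≤ g t * (A * Nrm q ν (Ioo a t) u) := by gcongr; exact h2'.trans h1
    _ = A * Nrm q ν (Ioo a t) (fun x => u x * g t) := by
        rw [Nrm_mul_const q hq ν measurableSet_Ioo hum]; ring
    _ ≤ A * RHSsup q a b μ ν u g := by
        gcongr
        refine Nrm_mono q hq ν measurableSet_Ioo measurableSet_Ioo fun x hx _ => ?_
        exact ⟨⟨hx.1, hx.2.trans ht.2⟩, by gcongr; exact h3 x hx.2⟩

/-! ### Dyadic sums -/

lemma tsum_rpow_le {ι : Type*} (x : ι → ℝ≥0∞) {r : ℝ} (hr : 1 ≤ r) :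
    ∑' k, x k ^ r ≤ (∑' k, x k) ^ r := by
  have hsplit : ∀ y : ℝ≥0∞, y ^ r = y * y ^ (r - 1) := fun y => by
    conv_lhs => rw [show r = 1 + (r - 1) by ring,
      ENNReal.rpow_add_of_nonneg _ _ zero_le_one (by linarith), ENNReal.rpow_one]
  rw [hsplit (∑' k, x k), ← ENNReal.tsum_mul_right]
  refine ENNReal.tsum_le_tsum fun k => ?_
  rw [hsplit]
  gcongr
  exact ENNReal.le_tsum k

/-- Dyadic layer-cake bound from above, at the level of a single value. -/
lemma rpow_le_dyadic {p : ℝ} (hp : 0 < p) (y : ℝ≥0∞) :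
    y ^ p ≤ ∑' k : ℤ, 2 ^ p * ((2 : ℝ≥0∞) ^ k) ^ p *
      (Ioi ((2 : ℝ≥0∞) ^ k)).indicator 1 y := by
  rcases eq_or_ne y 0 with rfl | h0
  · simp [hp]
  rcases eq_or_ne y ⊤ with rfl | ht
  · suffices h : ∑' k : ℤ, (2 : ℝ≥0∞) ^ p * ((2 : ℝ≥0∞) ^ k) ^ p *
        (Ioi ((2 : ℝ≥0∞) ^ k)).indicator 1 ⊤ = ⊤ by rw [h]; exact le_top
    rw [eq_top_iff]
    calc (⊤ : ℝ≥0∞) = ∑' _ : ℕ, (1 : ℝ≥0∞) := (ENNReal.tsum_const_eq_top_of_ne_zero one_ne_zero).symm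
      _ ≤ ∑' n : ℕ, (2 : ℝ≥0∞) ^ p * ((2 : ℝ≥0∞) ^ (n : ℤ)) ^ p *
        (Ioi ((2 : ℝ≥0∞) ^ (n : ℤ))).indicator 1 ⊤ := by
          refine ENNReal.tsum_le_tsum fun n => ?_
          have h1 : (⊤ : ℝ≥0∞) ∈ Ioi ((2 : ℝ≥0∞) ^ (n : ℤ)) := by simp
          rw [indicator_of_mem h1, Pi.one_apply, mul_one]
          refine one_le_mul (ENNReal.one_le_rpow one_le_two hp) (ENNReal.one_le_rpow ?_ hp)
          rw [zpow_natCast]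
          exact one_le_pow₀ one_le_two
      _ ≤ _ := ENNReal.tsum_comp_le_tsum_of_injective Nat.cast_injective _
  · obtain ⟨n, hn1, hn2⟩ := ENNReal.exists_mem_Ioc_zpow h0 ht one_lt_two ENNReal.ofNat_ne_top
    refine le_trans ?_ (ENNReal.le_tsum n)
    rw [ENNReal.zpow_add two_ne_zero ENNReal.ofNat_ne_top, zpow_one] at hn2
    rw [indicator_of_mem (show y ∈ Ioi _ from hn1), Pi.one_apply, mul_one,
      ← ENNReal.mul_rpow_of_nonneg _ _ hp.le, mul_comm]
    exact ENNReal.rpow_le_rpow hn2 hp.le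

/-- Dyadic layer-cake bound from below: a geometric series. -/
lemma dyadic_le_rpow {q : ℝ} (hq : 0 < q) (y : ℝ≥0∞) :
    ∑' k : ℤ, ((2 : ℝ≥0∞) ^ k) ^ q * (Ioi ((2 : ℝ≥0∞) ^ k)).indicator 1 y ≤
      (1 - (2⁻¹ : ℝ≥0∞) ^ q)⁻¹ * y ^ q := by
  rcases eq_or_ne y 0 with rfl | h0
  · simp
  rcases eq_or_ne y ⊤ with rfl | ht
  · rw [ENNReal.top_rpow_of_pos hq, ENNReal.mul_top]
    · exact le_top
    · exact ENNReal.inv_ne_zero.2 (ENNReal.sub_ne_top ENNReal.one_ne_top)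
  obtain ⟨n, hn1, hn2⟩ := ENNReal.exists_mem_Ioc_zpow h0 ht one_lt_two ENNReal.ofNat_ne_top
  -- Only the exponents `k = n - j` with `j ≥ 0` contribute.
  rw [← (Equiv.subLeft n).tsum_eq, ← (Nat.cast_injective (R := ℤ)).tsum_eq,
    ← ENNReal.tsum_geometric, ← ENNReal.tsum_mul_right]
  · refine ENNReal.tsum_le_tsum fun j => ?_
    have h1 : (2 : ℝ≥0∞) ^ (n - (j : ℤ)) = 2⁻¹ ^ j * 2 ^ n := by
      rw [ENNReal.zpow_sub two_ne_zero ENNReal.ofNat_ne_top, zpow_natCast, ENNReal.inv_pow,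
        mul_comm]
    rw [Equiv.subLeft_apply]
    refine (mul_le_of_le_one_right' (indicator_le_self' (fun _ _ => zero_le) y)).trans ?_
    rw [h1, ENNReal.mul_rpow_of_nonneg _ _ hq.le, ← ENNReal.rpow_natCast, ← ENNReal.rpow_natCast,
      ← ENNReal.rpow_mul, ← ENNReal.rpow_mul, mul_comm (j : ℝ) q]
    gcongr
  · intro j hj
    have hy : (2 : ℝ≥0∞) ^ (n - j) < y := by
      by_contra hle
      exact hj (by simp [hle])
    have hlt := hy.trans_le hn2
    have hj0 : 0 ≤ j := by
      by_contra! hneg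
      exact absurd hlt (not_lt.2 (ENNReal.zpow_le_of_le one_le_two (by lia)))
    exact ⟨j.toNat, Int.toNat_of_nonneg hj0⟩

/-! ### Sufficiency for finite exponent -/

/-- Distribution function form of the inequality: the measure `w^p μ` of `{g > l}` is bounded by
a power of the measure `u^q ν` of `{G > l}`, where `G x = ‖g‖_{∞,(x,b),μ}`. -/
lemma level_bound {p q : ℝ≥0∞} (hq : 0 < q) (hqt : q ≠ ⊤) (hp : 0 < p) (hpt : p ≠ ⊤)
    (a b : ℝ) (μ ν : Measure ℝ) (w u : ℝ → ℝ≥0∞) {A : ℝ≥0∞}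
    (hA : ∀ᵐ t ∂μ.restrict (Ioo a b), Nrm p μ (Ioc a t) w ≤ A * Nrm q ν (Ioo a t) u)
    (g : ℝ → ℝ≥0∞) (l : ℝ≥0∞) :
    (μ.restrict (Ioo a b)).withDensity (fun t => w t ^ p.toReal) {t | l < g t} ≤
      A ^ p.toReal * ((ν.restrict (Ioo a b)).withDensity (fun x => u x ^ q.toReal)
        {x | l < eSup μ (Ioo x b) g}) ^ (p.toReal / q.toReal) := by
  have hp0 : 0 < p.toReal := ENNReal.toReal_pos hp.ne' hpt
  have hq0 : 0 < q.toReal := ENNReal.toReal_pos hq.ne' hqt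
  set T : Set ℝ := {t | l < g t ∧ Nrm p μ (Ioc a t) w ≤ A * Nrm q ν (Ioo a t) u ∧
    (∀ s < t, g t ≤ eSup μ (Ioo s b) g) ∧ t ∈ Ioo a b} with hT
  refine (measure_mono_ae (t := T) ?_).trans (measure_le_of_forall_Iic _ _ _ fun t ht => ?_)
  · refine (withDensity_absolutelyContinuous _ _).ae_le ?_
    filter_upwards [hA, ae_le_eSup_Ioo μ a b g, ae_restrict_mem measurableSet_Ioo] with t h1 h2 h3 h4
    exact ⟨h4, h1, h2, h3⟩
  · obtain ⟨h1, h2, h3, h4⟩ := ht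
    have hG : MeasurableSet {x | l < eSup μ (Ioo x b) g} :=
      measurableSet_lt measurable_const (antitone_eSup μ b g).measurable
    rw [withDensity_apply _ measurableSet_Iic, withDensity_apply _ hG,
      Measure.restrict_restrict measurableSet_Iic, Measure.restrict_restrict hG]
    calc ∫⁻ x in Iic t ∩ Ioo a b, w x ^ p.toReal ∂μ ≤ ∫⁻ x in Ioc a t, w x ^ p.toReal ∂μ :=
          lintegral_mono_set fun x hx => ⟨hx.2.1, hx.1⟩
      _ = Nrm p μ (Ioc a t) w ^ p.toReal := by
          simp only [Nrm, if_neg hpt]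
          rw [← ENNReal.rpow_mul, one_div_mul_cancel hp0.ne', ENNReal.rpow_one]
      _ ≤ (A * Nrm q ν (Ioo a t) u) ^ p.toReal := ENNReal.rpow_le_rpow h2 hp0.le
      _ = A ^ p.toReal * (∫⁻ x in Ioo a t, u x ^ q.toReal ∂ν) ^ (p.toReal / q.toReal) := by
          rw [ENNReal.mul_rpow_of_nonneg _ _ hp0.le]
          simp only [Nrm, if_neg hqt]
          rw [← ENNReal.rpow_mul, one_div_mul_eq_div]
      _ ≤ _ := by
          refine mul_le_mul_right (ENNReal.rpow_le_rpow ?_ (by positivity)) _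
          exact lintegral_mono_set fun x hx =>
            ⟨h1.trans_le (h3 x hx.2), hx.1, hx.2.trans h4.2⟩

/-- Sufficiency for `p < ∞`: the level-set estimate `level_bound` is summed over the dyadic
levels `2 ^ k`, using `∑ x_k ^ (p/q) ≤ (∑ x_k) ^ (p/q)`. -/
lemma upper_finite {p q : ℝ≥0∞} (hq : 0 < q) (hqp : q ≤ p) (hpt : p ≠ ⊤)
    (a b : ℝ) (μ ν : Measure ℝ) (w u : ℝ → ℝ≥0∞) (hw : Measurable w) (hum : Measurable u)
    {A : ℝ≥0∞}
    (hA : ∀ᵐ t ∂μ.restrict (Ioo a b), Nrm p μ (Ioc a t) w ≤ A * Nrm q ν (Ioo a t) u)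
    (g : ℝ → ℝ≥0∞) (hg : Measurable g) :
    Nrm p μ (Ioo a b) (fun t => g t * w t) ≤
      2 * ((1 - (2⁻¹ : ℝ≥0∞) ^ q.toReal)⁻¹) ^ (1 / q.toReal) * A * RHSsup q a b μ ν u g := by
  have hqt : q ≠ ⊤ := ne_top_of_le_ne_top hpt hqp
  have hp : 0 < p := hq.trans_le hqp
  have hp0 : 0 < p.toReal := ENNReal.toReal_pos hp.ne' hpt
  have hq0 : 0 < q.toReal := ENNReal.toReal_pos hq.ne' hqt
  have hr : 1 ≤ p.toReal / q.toReal :=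
    (one_le_div hq0).2 ((ENNReal.toReal_le_toReal hqt hpt).2 hqp)
  have hlev := level_bound hq hqt hp hpt a b μ ν w u hA g
  have hGm : Measurable fun x => eSup μ (Ioo x b) g := (antitone_eSup μ b g).measurable
  simp only [RHSsup, Nrm, if_neg hpt, if_neg hqt]
  set G : ℝ → ℝ≥0∞ := fun x => eSup μ (Ioo x b) g with hG
  set K : ℝ≥0∞ := (1 - (2⁻¹ : ℝ≥0∞) ^ q.toReal)⁻¹ with hK
  set P := p.toReal with hP
  set Q := q.toReal with hQ
  set ρ := (μ.restrict (Ioo a b)).withDensity (fun t => w t ^ P) with hρ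
  set σ := (ν.restrict (Ioo a b)).withDensity (fun t => u t ^ Q) with hσ
  have hind : ∀ (f : ℝ → ℝ≥0∞) (k : ℤ) (t : ℝ), (Ioi ((2 : ℝ≥0∞) ^ k)).indicator 1 (f t) =
      {t | (2 : ℝ≥0∞) ^ k < f t}.indicator (1 : ℝ → ℝ≥0∞) t := fun f k t => by
    simp [indicator_apply]
  have hmeas : ∀ (f : ℝ → ℝ≥0∞), Measurable f → ∀ k : ℤ,
      MeasurableSet {t | (2 : ℝ≥0∞) ^ k < f t} := fun f hf k =>
    measurableSet_lt measurable_const hf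
  have hsum : ∀ (m : Measure ℝ) (f : ℝ → ℝ≥0∞), Measurable f → ∀ c : ℤ → ℝ≥0∞,
      ∫⁻ t, ∑' k : ℤ, c k * (Ioi ((2 : ℝ≥0∞) ^ k)).indicator 1 (f t) ∂m =
        ∑' k : ℤ, c k * m {t | (2 : ℝ≥0∞) ^ k < f t} := by
    intro m f hf c
    simp only [hind]
    rw [lintegral_tsum fun k =>
      ((measurable_one.indicator (hmeas f hf k)).const_mul _).aemeasurable]
    congr 1
    ext k
    rw [lintegral_const_mul _ (measurable_one.indicator (hmeas f hf k)),
      lintegral_indicator_one (hmeas f hf k)]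
  have hright : ∑' k : ℤ, ((2 : ℝ≥0∞) ^ k) ^ Q * σ {t | (2 : ℝ≥0∞) ^ k < G t} ≤
      K * ∫⁻ x in Ioo a b, (u x * G x) ^ Q ∂ν := by
    rw [← hsum σ G hGm]
    refine (lintegral_mono fun t => dyadic_le_rpow hq0 (G t)).trans ?_
    rw [lintegral_const_mul _ (hGm.pow_const _), hσ,
      lintegral_withDensity_eq_lintegral_mul _ (hum.pow_const _) (hGm.pow_const _)]
    simp only [Pi.mul_apply, ENNReal.mul_rpow_of_nonneg _ _ hq0.le]
    exact le_rfl
  have hmain : ∫⁻ t in Ioo a b, (g t * w t) ^ P ∂μ ≤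
      (2 * A) ^ P * (K * ∫⁻ x in Ioo a b, (u x * G x) ^ Q ∂ν) ^ (P / Q) := by
    calc ∫⁻ t in Ioo a b, (g t * w t) ^ P ∂μ = ∫⁻ t, g t ^ P ∂ρ := by
          rw [hρ, lintegral_withDensity_eq_lintegral_mul _ (hw.pow_const _) (hg.pow_const _)]
          simp only [Pi.mul_apply, ENNReal.mul_rpow_of_nonneg _ _ hp0.le, mul_comm]
      _ ≤ ∑' k : ℤ, 2 ^ P * ((2 : ℝ≥0∞) ^ k) ^ P * ρ {t | (2 : ℝ≥0∞) ^ k < g t} := by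
          rw [← hsum ρ g hg]
          exact lintegral_mono fun t => rpow_le_dyadic hp0 (g t)
      _ ≤ ∑' k : ℤ, (2 * A) ^ P *
            (((2 : ℝ≥0∞) ^ k) ^ Q * σ {t | (2 : ℝ≥0∞) ^ k < G t}) ^ (P / Q) := by
          refine ENNReal.tsum_le_tsum fun k => ?_
          refine (mul_le_mul_right (hlev _) _).trans (le_of_eq ?_)
          rw [ENNReal.mul_rpow_of_nonneg _ _ hp0.le,
            ENNReal.mul_rpow_of_nonneg _ _ (show 0 ≤ P / Q by positivity), ← ENNReal.rpow_mul,
            mul_div_cancel₀ _ hq0.ne']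
          ring
      _ ≤ (2 * A) ^ P * (∑' k : ℤ, ((2 : ℝ≥0∞) ^ k) ^ Q * σ {t | (2 : ℝ≥0∞) ^ k < G t}) ^ (P / Q) := by
          rw [ENNReal.tsum_mul_left]
          exact mul_le_mul_right (tsum_rpow_le _ hr) _
      _ ≤ _ := mul_le_mul_right (ENNReal.rpow_le_rpow hright (by positivity)) _
  refine (ENNReal.rpow_le_rpow hmain (by positivity)).trans (le_of_eq ?_)
  rw [ENNReal.mul_rpow_of_nonneg _ _ (by positivity), ← ENNReal.rpow_mul, ← ENNReal.rpow_mul,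
    mul_one_div_cancel hp0.ne', ENNReal.rpow_one, show P / Q * (1 / P) = 1 / Q by field_simp,
    ENNReal.mul_rpow_of_nonneg _ _ (by positivity)]
  ring

lemma exists_upper (p q : ℝ≥0∞) (hq : 0 < q) (hqp : q ≤ p) :
    ∃ C : ℝ≥0∞, C ≠ 0 ∧ C < ⊤ ∧ ∀ (a b : ℝ) (μ ν : Measure ℝ) (w u : ℝ → ℝ≥0∞),
      Measurable w → Measurable u → ∀ A : ℝ≥0∞,
      (∀ᵐ t ∂μ.restrict (Ioo a b), Nrm p μ (Ioc a t) w ≤ A * Nrm q ν (Ioo a t) u) →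
      ∀ g : ℝ → ℝ≥0∞, Measurable g →
        Nrm p μ (Ioo a b) (fun t => g t * w t) ≤ C * A * RHSsup q a b μ ν u g := by
  by_cases hpt : p = ⊤
  · subst hpt
    refine ⟨1, one_ne_zero, ENNReal.one_lt_top, fun a b μ ν w u hw hu A hA g _ => ?_⟩
    rw [one_mul]
    exact upper_top q hq a b μ ν w u hw hu hA g
  · have hq0 : 0 < q.toReal := ENNReal.toReal_pos hq.ne' (ne_top_of_le_ne_top hpt hqp)
    have h2 : (2⁻¹ : ℝ≥0∞) ^ q.toReal < 1 := ENNReal.rpow_lt_one ENNReal.one_half_lt_one hq0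
    refine ⟨2 * ((1 - (2⁻¹ : ℝ≥0∞) ^ q.toReal)⁻¹) ^ (1 / q.toReal), ?_, ?_,
      fun a b μ ν w u hw hu A hA g hg => upper_finite hq hqp hpt a b μ ν w u hw hu hA g hg⟩
    · refine mul_ne_zero two_ne_zero (ENNReal.rpow_pos_of_nonneg ?_ (by positivity)).ne'
      exact ENNReal.inv_pos.2 (ENNReal.sub_ne_top ENNReal.one_ne_top)
    · refine ENNReal.mul_lt_top ENNReal.ofNat_lt_top
        (ENNReal.rpow_lt_top_of_nonneg (by positivity) ?_)
      exact ENNReal.inv_ne_top.2 (tsub_pos_iff_lt.2 h2).ne'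

/-- Theorem 3.5 (i): for `0 < q ≤ p ≤ ∞`, the inequality
`‖gw‖_{p,(a,b),μ} ≤ c ‖u(x) ‖g‖_{∞,(x,b),μ}‖_{q,(a,b),ν}` holds for all `g ∈ B⁺((a,b))`
iff `A₁ = ‖ ‖w‖_{p,(a,x],μ} ‖u‖_{q,(a,x),ν}⁻¹ ‖_{∞,(a,b),μ} < ∞`, and the best constant
satisfies `c ≈ A₁` with equivalence constants depending only on `p` and `q`. -/
theorem statement0 (p q : ℝ≥0∞) (hq : 0 < q) (hqp : q ≤ p) :
    ∃ C₁ C₂ : ℝ≥0∞, 0 < C₁ ∧ C₂ < ⊤ ∧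
      ∀ (a b : ℝ), a < b →
      ∀ (μ ν : Measure ℝ) (w u : ℝ → ℝ≥0∞),
        Measurable w → Measurable u →
        (∀ t ∈ Ioo a b, Nrm q ν (Ioc a t) u < ⊤) →
        (∀ᵐ x ∂ν.restrict (Ioo a b), u x ≠ 0) →
        ((∃ c : ℝ≥0∞, 0 < c ∧ c < ⊤ ∧ ∀ g : ℝ → ℝ≥0∞, Measurable g →
            Nrm p μ (Ioo a b) (fun t => g t * w t) ≤ c * RHSsup q a b μ ν u g) ↔
          eSup μ (Ioo a b)
            (fun x => Nrm p μ (Ioc a x) w * (Nrm q ν (Ioo a x) u)⁻¹) < ⊤) ∧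
        C₁ * eSup μ (Ioo a b)
            (fun x => Nrm p μ (Ioc a x) w * (Nrm q ν (Ioo a x) u)⁻¹) ≤
          bestC p q a b μ ν w u ∧
        bestC p q a b μ ν w u ≤
          C₂ * eSup μ (Ioo a b)
            (fun x => Nrm p μ (Ioc a x) w * (Nrm q ν (Ioo a x) u)⁻¹) := by
  obtain ⟨C, hC0, hCt, hC⟩ := exists_upper p q hq hqp
  refine ⟨1, C, one_pos, hCt, fun a b _ μ ν w u hw hum hu _ => ?_⟩
  set A := eSup μ (Ioo a b)
    (fun x => Nrm p μ (Ioc a x) w * (Nrm q ν (Ioo a x) u)⁻¹) with hA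
  have hlow : ∀ c : ℝ≥0∞, (∀ g : ℝ → ℝ≥0∞, Measurable g →
      Nrm p μ (Ioo a b) (fun t => g t * w t) ≤ c * RHSsup q a b μ ν u g) → A ≤ c :=
    fun c hc => A_le p q hq (hq.trans_le hqp) a b μ ν w u c hc
  have hup : A < ⊤ → ∀ g : ℝ → ℝ≥0∞, Measurable g →
      Nrm p μ (Ioo a b) (fun t => g t * w t) ≤ C * A * RHSsup q a b μ ν u g := fun hAt =>
    hC a b μ ν w u hw hum A (ae_weight p q hq a b μ ν w u hu hA.symm hAt)
  refine ⟨⟨?_, fun hAt => ?_⟩, ?_, ?_⟩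
  · rintro ⟨c, _, hct, hc⟩
    exact (hlow c hc).trans_lt hct
  -- Adding `1` keeps the constant positive when `A = 0`.
  · refine ⟨C * A + 1, by positivity, ENNReal.add_lt_top.2
      ⟨ENNReal.mul_lt_top hCt hAt, ENNReal.one_lt_top⟩, fun g hg => (hup hAt g hg).trans ?_⟩
    gcongr
    exact le_self_add
  · rw [one_mul]
    exact le_sInf hlow
  · rcases eq_or_ne A ⊤ with hAt | hAt
    · rw [hAt, ENNReal.mul_top hC0]
      exact le_top
    · exact sInf_le (hup (lt_top_iff_ne_top.2 hAt))
end
end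

section
/- Let 0 < p < +∞. Let μ and ν be non-negative Borel measures on I = (a,b) ⊆ ℝ, let w ∈ B⁺(I), and let u ∈ B⁺(I) satisfy ‖u‖_{∞,(a,t],ν} < ∞ for all t ∈ I and u ≠ 0 ν-a.e. on (a,b). Then ( ∫_{(a,b)} ( w(x) / ‖u‖_{∞,(a,x),ν} )^p dμ(x) )^{1/p} ≈ ( ∫_{(a,b)} ‖w‖_{p,(a,x],μ}^p d( −‖u‖_{∞,(a,x+],ν}^{−p} ) )^{1/p} + ‖w‖_{p,(a,b),μ} · ‖u‖_{∞,(a,b),ν}^{−1}, where ‖u‖_{∞,(a,x+],ν} := lim_{s→x+} ‖u‖_{∞,(a,s],ν}, the integral is the Lebesgue–Stieltjes integral with respect to the non-decreasing right-continuous function x ↦ −‖u‖_{∞,(a,x+],ν}^{−p}, and the equivalence constants depend only on p. -/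
/-!
Write `r` for the real number `p`, `U(y) = ‖u‖_{∞,(a,y),ν}` and `G(x) = ‖u‖_{∞,(a,x+],ν}⁻ʳ`.
The two-sided estimate comes from an exact identity between `r`-th powers
(`lintegral_identity`),
`∫_{(a,b)} (w/U)ʳ dμ = ∫_{(a,b)} ‖w‖ʳ_{p,(a,x],μ} dλ(x) + ‖w‖ʳ_{p,(a,b),μ} U(b)⁻ʳ`,
followed by `(X + Y)^{1/r} ≈ X^{1/r} + Y^{1/r}`, with constants `1/2` and `2^{1/r}`.

The identity rests on two facts.

* The tail formula `U(y)⁻ʳ = λ([y,b)) + U(b)⁻ʳ` (`lam_Ico_add`). The essential supremum is left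
  continuous, so `U(y)⁻ʳ` is the infimum of `G` over points increasing to `y`, and continuity
  from below of `λ` gives `λ((α,y)) = G(α) - U(y)⁻ʳ`. Comparing this at `y` and at `b` yields the
  formula, including when `G(α) = ∞` for all `α < y`.
* Tonelli's theorem for the kernel `1_{y ≤ x}`, which holds for arbitrary Borel measures on the
  line (`lintegral_Iic_eq_lintegral_Ici`). This generality is needed because neither `wʳ dμ` nor
  `λ` has to be σ-finite.
-/

open MeasureTheory Set ENNReal

noncomputable section

/-- `‖u‖_{∞,(a,x+],ν} := lim_{s→x+} ‖u‖_{∞,(a,s],ν}`; since `s ↦ ‖u‖_{∞,(a,s],ν}` is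
non-decreasing, the right limit at `x ∈ (a,b)` equals the infimum over `s ∈ (x,b)`. -/
def uNplus (ν : Measure ℝ) (a b : ℝ) (u : ℝ → ℝ≥0∞) (x : ℝ) : ℝ≥0∞ :=
  ⨅ s ∈ Ioo x b, eSup ν (Ioc a s) u

/-! ### Fubini for half-line kernels, without σ-finiteness -/

/-- Every set of reals has a countable cofinal subset. -/
lemma exists_countable_cofinal (S : Set ℝ) :
    ∃ D ⊆ S, D.Countable ∧ ∀ x ∈ S, ∃ d ∈ D, x ≤ d := by
  obtain ⟨D, hDS, hDc, hD⟩ := (TopologicalSpace.IsSeparable.of_separableSpace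
    S).exists_countable_dense_subset
  by_cases hm : ∃ m ∈ S, ∀ x ∈ S, x ≤ m
  · obtain ⟨m, hm, hmS⟩ := hm
    exact ⟨{m}, by simpa using hm, countable_singleton m, fun x hx => ⟨m, rfl, hmS x hx⟩⟩
  · push Not at hm
    refine ⟨D, hDS, hDc, fun x hx => ?_⟩
    obtain ⟨z, hz, hxz⟩ := hm x hx
    obtain ⟨d, hd, hdD⟩ := mem_closure_iff.1 (hD hz) (Ioi x) isOpen_Ioi hxz
    exact ⟨d, hdD, le_of_lt hd⟩

lemma exists_countable_coinitial (S : Set ℝ) :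
    ∃ D ⊆ S, D.Countable ∧ ∀ x ∈ S, ∃ d ∈ D, d ≤ x := by
  obtain ⟨D, hDS, hDc, hD⟩ := exists_countable_cofinal (Neg.neg ⁻¹' S)
  refine ⟨Neg.neg ⁻¹' D, fun x hx => by simpa using hDS hx,
    hDc.preimage neg_injective, fun x hx => ?_⟩
  obtain ⟨d, hd, hxd⟩ := hD (-x) (by simpa using hx)
  exact ⟨-d, by simpa using hd, by linarith⟩

/-- A measure giving finite mass to the members of a countable cover of `T` is s-finite on `T`. -/
lemma sFinite_restrict_of_countable_cover (μ : Measure ℝ) (T D : Set ℝ)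
    (hD : D.Countable) (A : ℝ → Set ℝ) (hA : ∀ d ∈ D, μ (A d) < ⊤) (hT : T ⊆ ⋃ d : D, A d) :
    SFinite (μ.restrict T) := by
  have := hD.to_subtype
  have hfin : ∀ d : D, IsFiniteMeasure (μ.restrict (A d)) := fun d =>
    ⟨by simpa using hA d d.2⟩
  have hle : μ.restrict T ≤ Measure.sum fun d : D => μ.restrict (A d) :=
    (Measure.restrict_mono_set μ hT).trans Measure.restrict_iUnion_le
  exact sFinite_of_absolutelyContinuous hle.absolutelyContinuous

lemma measurable_measure_Iic (μ : Measure ℝ) : Measurable fun x => μ (Iic x) :=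
  Monotone.measurable fun _ _ h => measure_mono (Iic_subset_Iic.2 h)

lemma measurable_measure_Ici (μ : Measure ℝ) : Measurable fun x => μ (Ici x) :=
  Antitone.measurable fun _ _ h => measure_mono (Ici_subset_Ici.2 h)

/-- Tonelli's theorem for the kernel `1_{y ≤ x}`, s-finite case. -/
lemma lintegral_Iic_eq_lintegral_Ici_of_sFinite (μ lam : Measure ℝ) [SFinite μ] [SFinite lam] :
    ∫⁻ x, μ (Iic x) ∂lam = ∫⁻ y, lam (Ici y) ∂μ := by
  have hm : MeasurableSet {z : ℝ × ℝ | z.2 ≤ z.1} := measurableSet_le measurable_snd measurable_fst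
  have h := lintegral_lintegral_swap (μ := lam) (ν := μ)
    (f := fun x y => ({z : ℝ × ℝ | z.2 ≤ z.1}.indicator 1 (x, y) : ℝ≥0∞))
    (measurable_one.indicator hm).aemeasurable
  have h1 : ∀ x, ∫⁻ y, ({z : ℝ × ℝ | z.2 ≤ z.1}.indicator 1 (x, y) : ℝ≥0∞) ∂μ = μ (Iic x) := by
    intro x
    rw [← lintegral_indicator_one measurableSet_Iic]
    rfl
  have h2 : ∀ y, ∫⁻ x, ({z : ℝ × ℝ | z.2 ≤ z.1}.indicator 1 (x, y) : ℝ≥0∞) ∂lam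
      = lam (Ici y) := by
    intro y
    rw [← lintegral_indicator_one measurableSet_Ici]
    rfl
  simpa only [h1, h2] using h

/-- Tonelli's theorem for the kernel `1_{y ≤ x}` holds for arbitrary Borel measures on `ℝ`.
If `lam` charges the set where `μ (Iic x) = ∞`, or `μ` charges the set where `lam (Ici y) = ∞`,
both sides are infinite; otherwise both measures may be replaced by s-finite restrictions. -/
lemma lintegral_Iic_eq_lintegral_Ici (μ lam : Measure ℝ) :
    ∫⁻ x, μ (Iic x) ∂lam = ∫⁻ y, lam (Ici y) ∂μ := by
  set T : Set ℝ := {x | μ (Iic x) < ⊤} with hT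
  set T' : Set ℝ := {y | lam (Ici y) < ⊤} with hT'
  have mT : MeasurableSet T := measurable_measure_Iic μ measurableSet_Iio
  have mT' : MeasurableSet T' := measurable_measure_Ici lam measurableSet_Iio
  have hTlow : ∀ x ∈ T, Iic x ⊆ T := fun x hx z hz =>
    (measure_mono (Iic_subset_Iic.2 hz)).trans_lt hx
  have hTup : ∀ x ∈ T', Ici x ⊆ T' := fun x hx z hz =>
    (measure_mono (Ici_subset_Ici.2 hz)).trans_lt hx
  have hTc : ∀ x ∉ T, μ (Iic x) = ⊤ := fun x hx => not_lt_top_iff.1 hx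
  have hTc' : ∀ x ∉ T', lam (Ici x) = ⊤ := fun x hx => not_lt_top_iff.1 hx
  have key1 : ∀ x, ∫⁻ y, lam (Ici y) ∂μ ≥ lam (Ici x) * μ (Iic x) := fun x => by
    rw [← setLIntegral_const]
    exact (setLIntegral_mono (measurable_measure_Ici lam)
      fun y hy => measure_mono (Ici_subset_Ici.2 hy)).trans (setLIntegral_le_lintegral _ _)
  have key2 : ∀ x, ∫⁻ y, μ (Iic y) ∂lam ≥ μ (Iic x) * lam (Ici x) := fun x => by
    rw [← setLIntegral_const]
    exact (setLIntegral_mono (measurable_measure_Iic μ)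
      fun y hy => measure_mono (Iic_subset_Iic.2 hy)).trans (setLIntegral_le_lintegral _ _)
  by_cases h1 : lam Tᶜ = 0
  swap
  · obtain ⟨D, hDT, hDc, hD⟩ := exists_countable_coinitial Tᶜ
    obtain ⟨d, hd, hpos⟩ : ∃ d ∈ D, lam (Ici d) ≠ 0 := by
      by_contra! hcon
      refine h1 (measure_mono_null ?_ ((measure_biUnion_null_iff hDc).2 hcon))
      intro x hx
      obtain ⟨d, hd, hdx⟩ := hD x hx
      exact mem_biUnion hd hdx
    have e1 := key1 d
    have e2 := key2 d
    rw [hTc d (hDT hd), ENNReal.mul_top hpos, ge_iff_le, top_le_iff] at e1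
    rw [hTc d (hDT hd), ENNReal.top_mul hpos, ge_iff_le, top_le_iff] at e2
    rw [e1, e2]
  by_cases h2 : μ T'ᶜ = 0
  swap
  · obtain ⟨D, hDT, hDc, hD⟩ := exists_countable_cofinal T'ᶜ
    obtain ⟨d, hd, hpos⟩ : ∃ d ∈ D, μ (Iic d) ≠ 0 := by
      by_contra! hcon
      refine h2 (measure_mono_null ?_ ((measure_biUnion_null_iff hDc).2 hcon))
      intro x hx
      obtain ⟨d, hd, hdx⟩ := hD x hx
      exact mem_biUnion hd hdx
    have e1 := key1 d
    have e2 := key2 d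
    rw [hTc' d (hDT hd), ENNReal.top_mul hpos, ge_iff_le, top_le_iff] at e1
    rw [hTc' d (hDT hd), ENNReal.mul_top hpos, ge_iff_le, top_le_iff] at e2
    rw [e1, e2]
  have s1 : SFinite (μ.restrict T) := by
    obtain ⟨D, hDT, hDc, hD⟩ := exists_countable_cofinal T
    refine sFinite_restrict_of_countable_cover μ T D hDc Iic (fun d hd => hDT hd) fun x hx => ?_
    obtain ⟨d, hd, hdx⟩ := hD x hx
    exact mem_iUnion.2 ⟨⟨d, hd⟩, hdx⟩
  have s2 : SFinite (lam.restrict T') := by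
    obtain ⟨D, hDT, hDc, hD⟩ := exists_countable_coinitial T'
    refine sFinite_restrict_of_countable_cover lam T' D hDc Ici (fun d hd => hDT hd)
      fun x hx => ?_
    obtain ⟨d, hd, hdx⟩ := hD x hx
    exact mem_iUnion.2 ⟨⟨d, hd⟩, hdx⟩
  have h := lintegral_Iic_eq_lintegral_Ici_of_sFinite (μ.restrict T) (lam.restrict T')
  have eL : ∫⁻ x, μ (Iic x) ∂lam = ∫⁻ x, μ.restrict T (Iic x) ∂lam.restrict T' := by
    rw [← lintegral_indicator mT']
    have hae : ∀ᵐ x ∂lam, x ∈ T := h1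
    refine lintegral_congr_ae (hae.mono fun x hx => ?_)
    have hr : μ.restrict T (Iic x) = μ (Iic x) :=
      Measure.restrict_eq_self μ (hTlow x hx)
    by_cases hx' : x ∈ T'
    · rw [indicator_of_mem hx', hr]
    · have : Iic x ⊆ T'ᶜ := fun z hz hz' => hx' (hTup z hz' hz)
      simp [hx', measure_mono_null this h2]
  have eR : ∫⁻ y, lam (Ici y) ∂μ = ∫⁻ y, lam.restrict T' (Ici y) ∂μ.restrict T := by
    rw [← lintegral_indicator mT]
    have hae : ∀ᵐ x ∂μ, x ∈ T' := h2
    refine lintegral_congr_ae (hae.mono fun x hx => ?_)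
    have hr : lam.restrict T' (Ici x) = lam (Ici x) :=
      Measure.restrict_eq_self lam (hTup x hx)
    by_cases hx' : x ∈ T
    · rw [indicator_of_mem hx', hr]
    · have : Ici x ⊆ Tᶜ := fun z hz hz' => hx' (hTlow z hz' hz)
      simp [hx', measure_mono_null this h1]
  rw [eL, eR, h]

/-! ### Monotonicity and left continuity of the essential supremum -/

lemma eSup_mono (ν : Measure ℝ) (u : ℝ → ℝ≥0∞) {E E' : Set ℝ} (h : E ⊆ E') :
    eSup ν E u ≤ eSup ν E' u :=
  sSup_le_sSup fun α (hα : 0 < ν {y | y ∈ E ∧ α ≤ u y}) =>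
    show 0 < ν {y | y ∈ E' ∧ α ≤ u y} from
      hα.trans_le (measure_mono fun _ hy => ⟨h hy.1, hy.2⟩)

/-- Countable subadditivity of null sets, read off for the essential supremum. -/
lemma eSup_le_iSup (ν : Measure ℝ) (u : ℝ → ℝ≥0∞) {E : Set ℝ} (A : ℕ → Set ℝ)
    (h : E ⊆ ⋃ n, A n) : eSup ν E u ≤ ⨆ n, eSup ν (A n) u := by
  refine sSup_le fun α hα => ?_
  have hpos : ∃ n, 0 < ν {y | y ∈ A n ∧ α ≤ u y} := by
    by_contra! hcon
    refine (ne_of_gt hα) (measure_mono_null ?_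
      (measure_iUnion_null fun n => nonpos_iff_eq_zero.1 (hcon n)))
    intro y hy
    obtain ⟨n, hn⟩ := mem_iUnion.1 (h hy.1)
    exact mem_iUnion.2 ⟨n, hn, hy.2⟩
  obtain ⟨n, hn⟩ := hpos
  have hle : α ≤ eSup ν (A n) u := le_sSup hn
  exact hle.trans (le_iSup (fun n => eSup ν (A n) u) n)

/-! ### The Lebesgue–Stieltjes measure of a tail -/

section Tail

variable {ν lam : Measure ℝ} {u : ℝ → ℝ≥0∞} {a b r : ℝ}

lemma uNplus_le_eSup {y s : ℝ} (hsy : s < y) (hyb : y ≤ b) :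
    uNplus ν a b u s ≤ eSup ν (Ioo a y) u := by
  obtain ⟨t, hst, hty⟩ := exists_between hsy
  exact (iInf₂_le t ⟨hst, hty.trans_le hyb⟩).trans
    (eSup_mono ν u fun z hz => ⟨hz.1, hz.2.trans_lt hty⟩)

lemma eSup_le_uNplus (s : ℝ) : eSup ν (Ioc a s) u ≤ uNplus ν a b u s :=
  le_iInf₂ fun _ ht => eSup_mono ν u (Ioc_subset_Ioc_right ht.1.le)

/-- The left limit of `‖u‖_{∞,(a,x+],ν}⁻ʳ` at `y` is `‖u‖_{∞,(a,y),ν}⁻ʳ`. -/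
lemma inv_eSup_eq_iInf (hr : 0 < r) {y : ℝ} (hyb : y ≤ b) (s : ℕ → ℝ)
    (hs : ∀ n, s n < y) (hlim : Filter.Tendsto s Filter.atTop (nhds y)) :
    (eSup ν (Ioo a y) u ^ r)⁻¹ = ⨅ n, (uNplus ν a b u (s n) ^ r)⁻¹ := by
  have hsup : eSup ν (Ioo a y) u = ⨆ n, uNplus ν a b u (s n) := by
    refine le_antisymm ?_ (iSup_le fun n => uNplus_le_eSup (hs n) hyb)
    refine (eSup_le_iSup ν u (fun n => Ioc a (s n)) fun z hz => ?_).trans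
      (iSup_mono fun n => eSup_le_uNplus (s n))
    obtain ⟨n, hn⟩ := (hlim.eventually (lt_mem_nhds hz.2)).exists
    exact mem_iUnion.2 ⟨n, hz.1, hn.le⟩
  rw [hsup, ← ENNReal.inv_iSup]
  congr 1
  exact (ENNReal.orderIsoRpow r hr).map_iSup _

/-- Continuity from below turns the formula for `λ((α,β])` into one for `λ((α,y))`; the endpoint
`y = b` is allowed. -/
lemma lam_Ioo (hr : 0 < r)
    (hlam : ∀ α β : ℝ, a < α → α ≤ β → β < b →
      lam (Ioc α β) = (uNplus ν a b u α ^ r)⁻¹ - (uNplus ν a b u β ^ r)⁻¹)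
    {α y : ℝ} (haα : a < α) (hαy : α < y) (hyb : y ≤ b) :
    lam (Ioo α y) = (uNplus ν a b u α ^ r)⁻¹ - (eSup ν (Ioo a y) u ^ r)⁻¹ := by
  obtain ⟨s, hmono, hs, hlim⟩ := exists_seq_strictMono_tendsto' hαy
  have hU : Ioo α y = ⋃ n, Ioc α (s n) := by
    refine Subset.antisymm (fun z hz => ?_)
      (iUnion_subset fun n z hz => ⟨hz.1, hz.2.trans_lt (hs n).2⟩)
    obtain ⟨n, hn⟩ := (hlim.eventually (lt_mem_nhds hz.2)).exists
    exact mem_iUnion.2 ⟨n, hz.1, hn.le⟩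
  have hM : Monotone fun n => Ioc α (s n) := fun m n hmn =>
    Ioc_subset_Ioc_right (hmono.monotone hmn)
  rw [hU, hM.measure_iUnion, inv_eSup_eq_iInf hr hyb s (fun n => (hs n).2) hlim, ENNReal.sub_iInf]
  exact iSup_congr fun n => hlam _ _ haα (hs n).1.le ((hs n).2.trans_le hyb)

/-- The tail formula: `‖u‖_{∞,(a,y),ν}⁻ʳ = λ([y,b)) + ‖u‖_{∞,(a,b),ν}⁻ʳ`, with all terms allowed
to be infinite. -/
lemma lam_Ico_add (hr : 0 < r)
    (hlam : ∀ α β : ℝ, a < α → α ≤ β → β < b →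
      lam (Ioc α β) = (uNplus ν a b u α ^ r)⁻¹ - (uNplus ν a b u β ^ r)⁻¹)
    {y : ℝ} (hy : y ∈ Ioo a b) :
    (eSup ν (Ioo a y) u ^ r)⁻¹ = lam (Ico y b) + (eSup ν (Ioo a b) u ^ r)⁻¹ := by
  have hFb : (eSup ν (Ioo a b) u ^ r)⁻¹ ≤ (eSup ν (Ioo a y) u ^ r)⁻¹ :=
    ENNReal.inv_le_inv.2 (ENNReal.rpow_le_rpow (eSup_mono ν u (Ioo_subset_Ioo_right hy.2.le)) hr.le)
  have hG : ∀ s < y, (eSup ν (Ioo a y) u ^ r)⁻¹ ≤ (uNplus ν a b u s ^ r)⁻¹ := fun s hs =>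
    ENNReal.inv_le_inv.2 (ENNReal.rpow_le_rpow (uNplus_le_eSup hs hy.2.le) hr.le)
  have hadd : ∀ α, a < α → α < y →
      (uNplus ν a b u α ^ r)⁻¹ - (eSup ν (Ioo a b) u ^ r)⁻¹ =
        ((uNplus ν a b u α ^ r)⁻¹ - (eSup ν (Ioo a y) u ^ r)⁻¹) + lam (Ico y b) := by
    intro α h1 h2
    rw [← lam_Ioo hr hlam h1 h2 hy.2.le, ← lam_Ioo hr hlam h1 (h2.trans hy.2) le_rfl,
      ← measure_union _ measurableSet_Ico, Ioo_union_Ico_eq_Ioo h2 hy.2.le]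
    exact disjoint_left.2 fun z hz hz' => (hz.2.not_ge hz'.1)
  by_cases hfin : ∃ α, a < α ∧ α < y ∧ (uNplus ν a b u α ^ r)⁻¹ ≠ ⊤
  · obtain ⟨α, h1, h2, h3⟩ := hfin
    have h4 : (eSup ν (Ioo a y) u ^ r)⁻¹ ≠ ⊤ := ne_top_of_le_ne_top h3 (hG α h2)
    have h5 := hadd α h1 h2
    have h6 : (eSup ν (Ioo a y) u ^ r)⁻¹ + ((uNplus ν a b u α ^ r)⁻¹ - (eSup ν (Ioo a y) u ^ r)⁻¹)
        = (uNplus ν a b u α ^ r)⁻¹ := add_tsub_cancel_of_le (hG α h2)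
    have h7 : (uNplus ν a b u α ^ r)⁻¹ - (eSup ν (Ioo a b) u ^ r)⁻¹ + (eSup ν (Ioo a b) u ^ r)⁻¹
        = (uNplus ν a b u α ^ r)⁻¹ := tsub_add_cancel_of_le (hFb.trans (hG α h2))
    have h8 : (uNplus ν a b u α ^ r)⁻¹ - (eSup ν (Ioo a y) u ^ r)⁻¹ ≠ ⊤ :=
      ne_top_of_le_ne_top h3 tsub_le_self
    rw [h5] at h7
    refine (ENNReal.add_right_inj h8).1 ?_
    rw [← add_assoc, h7, add_comm, h6]
  · push Not at hfin
    obtain ⟨s, -, hs, hlim⟩ := exists_seq_strictMono_tendsto' hy.1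
    have htop : (eSup ν (Ioo a y) u ^ r)⁻¹ = ⊤ := by
      rw [inv_eSup_eq_iInf hr hy.2.le s (fun n => (hs n).2) hlim]
      exact iInf_eq_top.2 fun n => hfin _ (hs n).1 (hs n).2
    have h5 := hadd (s 0) (hs 0).1 (hs 0).2
    rw [hfin _ (hs 0).1 (hs 0).2, htop, tsub_self, zero_add] at h5
    rw [htop, ← h5]
    by_cases hb : (eSup ν (Ioo a b) u ^ r)⁻¹ = ⊤
    · rw [hb, add_top]
    · rw [ENNReal.top_sub hb, top_add]

/-- The identity behind the equivalence, between the `r`-th powers of both sides. -/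
lemma lintegral_identity (hr : 0 < r) (μ : Measure ℝ) {w : ℝ → ℝ≥0∞} (hw : Measurable w)
    (hlam : ∀ α β : ℝ, a < α → α ≤ β → β < b →
      lam (Ioc α β) = (uNplus ν a b u α ^ r)⁻¹ - (uNplus ν a b u β ^ r)⁻¹) :
    ∫⁻ x in Ioo a b, (w x / eSup ν (Ioo a x) u) ^ r ∂μ =
      (∫⁻ x in Ioo a b, (∫⁻ y in Ioc a x, w y ^ r ∂μ) ∂lam) +
        (∫⁻ y in Ioo a b, w y ^ r ∂μ) * (eSup ν (Ioo a b) u ^ r)⁻¹ := by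
  have hwr : Measurable fun x => w x ^ r := hw.pow_const r
  set m := (μ.restrict (Ioo a b)).withDensity (fun x => w x ^ r) with hm
  have hN := measurable_measure_Ici (lam.restrict (Ioo a b))
  have e1 : ∫⁻ x in Ioo a b, (w x / eSup ν (Ioo a x) u) ^ r ∂μ =
      ∫⁻ x in Ioo a b, (w x ^ r * lam.restrict (Ioo a b) (Ici x) +
        w x ^ r * (eSup ν (Ioo a b) u ^ r)⁻¹) ∂μ := by
    refine setLIntegral_congr_fun measurableSet_Ioo fun x hx => ?_
    have hset : Ici x ∩ Ioo a b = Ico x b := by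
      ext z
      exact ⟨fun h => ⟨h.1, h.2.2⟩, fun h => ⟨h.1, hx.1.trans_le h.1, h.2⟩⟩
    rw [ENNReal.div_rpow_of_nonneg _ _ hr.le, div_eq_mul_inv, lam_Ico_add hr hlam hx,
      Measure.restrict_apply measurableSet_Ici, hset, mul_add]
  have e2 : ∫⁻ x in Ioo a b, (∫⁻ y in Ioc a x, w y ^ r ∂μ) ∂lam =
      ∫⁻ x in Ioo a b, m (Iic x) ∂lam := by
    refine setLIntegral_congr_fun measurableSet_Ioo fun x hx => ?_
    have hset : Iic x ∩ Ioo a b = Ioc a x := by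
      ext z
      exact ⟨fun h => ⟨h.2.1, h.1⟩, fun h => ⟨h.2, h.1, h.2.trans_lt hx.2⟩⟩
    rw [hm, withDensity_apply _ measurableSet_Iic, Measure.restrict_restrict measurableSet_Iic,
      hset]
  rw [e1, lintegral_add_left (f := fun x => w x ^ r * lam.restrict (Ioo a b) (Ici x))
    (hwr.mul hN), lintegral_mul_const _ hwr, e2,
    lintegral_Iic_eq_lintegral_Ici, hm, lintegral_withDensity_eq_lintegral_mul _ hwr hN]
  rfl

end Tail

/-- The equivalence in Theorem 3.5 (iii):
`(∫_{(a,b)} (w(x)/‖u‖_{∞,(a,x),ν})^p dμ(x))^{1/p}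
  ≈ (∫_{(a,b)} ‖w‖_{p,(a,x],μ}^p d(-‖u‖_{∞,(a,x+],ν}^{-p}))^{1/p}
    + ‖w‖_{p,(a,b),μ} ‖u‖_{∞,(a,b),ν}⁻¹`,
where the Lebesgue–Stieltjes measure `lam` of the non-decreasing right-continuous
function `x ↦ -‖u‖_{∞,(a,x+],ν}^{-p}` is determined by
`lam((α,β]) = ‖u‖_{∞,(a,α+],ν}^{-p} - ‖u‖_{∞,(a,β+],ν}^{-p}`; the equivalence
constants depend only on `p`. -/
theorem statement3 (p : ℝ≥0∞) (hp : 0 < p) (hp' : p ≠ ⊤) :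
    ∃ C₁ C₂ : ℝ≥0∞, 0 < C₁ ∧ C₂ < ⊤ ∧
      ∀ (a b : ℝ), a < b →
      ∀ (μ ν : Measure ℝ) (w u : ℝ → ℝ≥0∞),
        Measurable w → Measurable u →
        (∀ t ∈ Ioo a b, eSup ν (Ioc a t) u < ⊤) →
        (∀ᵐ x ∂ν.restrict (Ioo a b), u x ≠ 0) →
        ∀ lam : Measure ℝ,
        (∀ α β : ℝ, a < α → α ≤ β → β < b →
            lam (Ioc α β) =
              (uNplus ν a b u α ^ p.toReal)⁻¹ - (uNplus ν a b u β ^ p.toReal)⁻¹) →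
        C₁ * ((∫⁻ x in Ioo a b, Nrm p μ (Ioc a x) w ^ p.toReal ∂lam) ^ (1 / p.toReal) +
            Nrm p μ (Ioo a b) w * (eSup ν (Ioo a b) u)⁻¹) ≤
          (∫⁻ x in Ioo a b, (w x / eSup ν (Ioo a x) u) ^ p.toReal ∂μ) ^ (1 / p.toReal) ∧
        (∫⁻ x in Ioo a b, (w x / eSup ν (Ioo a x) u) ^ p.toReal ∂μ) ^ (1 / p.toReal) ≤
          C₂ * ((∫⁻ x in Ioo a b, Nrm p μ (Ioc a x) w ^ p.toReal ∂lam) ^ (1 / p.toReal) +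
            Nrm p μ (Ioo a b) w * (eSup ν (Ioo a b) u)⁻¹) := by
  have hr : 0 < p.toReal := ENNReal.toReal_pos hp.ne' hp'
  have hq : 0 < 1 / p.toReal := one_div_pos.2 hr
  refine ⟨2⁻¹, 2 ^ (1 / p.toReal), by simp, ENNReal.rpow_lt_top_of_nonneg hq.le (by simp), ?_⟩
  intro a b _ μ ν w u hw _ _ _ lam hlam
  have hpow : ∀ z : ℝ≥0∞, (z ^ (1 / p.toReal)) ^ p.toReal = z := fun z => by
    rw [← ENNReal.rpow_mul, one_div_mul_cancel hr.ne', ENNReal.rpow_one]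
  have hpow' : ∀ z : ℝ≥0∞, (z ^ p.toReal) ^ (1 / p.toReal) = z := fun z => by
    rw [← ENNReal.rpow_mul, mul_one_div_cancel hr.ne', ENNReal.rpow_one]
  have hB : Nrm p μ (Ioo a b) w * (eSup ν (Ioo a b) u)⁻¹ =
      ((∫⁻ y in Ioo a b, w y ^ p.toReal ∂μ) * (eSup ν (Ioo a b) u ^ p.toReal)⁻¹) ^
        (1 / p.toReal) := by
    rw [Nrm, if_neg hp', ENNReal.mul_rpow_of_nonneg _ _ hq.le, ENNReal.inv_rpow, hpow']
  have hA : ∀ x, Nrm p μ (Ioc a x) w ^ p.toReal = ∫⁻ y in Ioc a x, w y ^ p.toReal ∂μ := fun x => by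
    rw [Nrm, if_neg hp', hpow]
  rw [lintegral_identity hr μ hw hlam, hB]
  simp only [hA]
  generalize (∫⁻ x in Ioo a b, (∫⁻ y in Ioc a x, w y ^ p.toReal ∂μ) ∂lam) = X
  generalize (∫⁻ y in Ioo a b, w y ^ p.toReal ∂μ) * (eSup ν (Ioo a b) u ^ p.toReal)⁻¹ = Y
  constructor
  · calc 2⁻¹ * (X ^ (1 / p.toReal) + Y ^ (1 / p.toReal))
        ≤ 2⁻¹ * ((X + Y) ^ (1 / p.toReal) + (X + Y) ^ (1 / p.toReal)) := by
          gcongr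
          · exact le_self_add
          · exact le_add_self
      _ = (X + Y) ^ (1 / p.toReal) := by
          rw [← two_mul, ← mul_assoc, ENNReal.inv_mul_cancel (by simp) (by simp), one_mul]
  · calc (X + Y) ^ (1 / p.toReal) ≤ (2 * max X Y) ^ (1 / p.toReal) := by
          rw [two_mul]
          gcongr
          · exact le_max_left _ _
          · exact le_max_right _ _
      _ = 2 ^ (1 / p.toReal) * (max X Y) ^ (1 / p.toReal) := ENNReal.mul_rpow_of_nonneg _ _ hq.le
      _ ≤ 2 ^ (1 / p.toReal) * (X ^ (1 / p.toReal) + Y ^ (1 / p.toReal)) := by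
          gcongr
          rcases le_total X Y with h | h
          · rw [max_eq_right h]; exact le_add_self
          · rw [max_eq_left h]; exact le_self_add
end
end
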